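/- For all positive integers n and m such that 𝒫(n,m) is nonempty, every graph G ∈ 𝒫(n,m) satisfies |add(G)| ≥ (n+m)(n−m−1)/2; in particular, add(n,m) ≥ (n+m)(n−m−1)/2. -/

import Mathlib

/-!
An edge joining two components of `G` is a bridge of the resulting graph. A 2-connected minor of a
graph with a bridge already is a minor of one of the two sides: at most one branch set contains an
end of the bridge on a given side, and deleting the corresponding vertex leaves the minor connected,
so branch sets cannot lie strictly on both sides, and those reaching across the bridge can be cut
off at its end. Since `K₅` and `K₃,₃` are 2-connected, every pair of vertices in different
components of a planar graph is an addable non-edge.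

A component with `k` vertices has at least `k - 1` edges. Hence the component sizes satisfy
`∑ (k - 1) ≤ m`, in particular each `k - 1` is at most `m`, and
`∑ k² = ∑ k + ∑ k (k - 1) ≤ n + (m + 1) m`. Among the `n²` ordered pairs of vertices at least
`n² - n - m (m + 1) = (n + m) (n - m - 1)` therefore are in different components.
-/

open SimpleGraph Filter Asymptotics

/-- `H` is a minor of `G`: to each vertex of `H` we can assign a connected nonempty
branch set in `G`, pairwise disjoint, with an edge of `G` between the branch sets of
any two adjacent vertices of `H`. -/
def IsMinor {α β : Type*} (H : SimpleGraph α) (G : SimpleGraph β) : Prop :=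
  ∃ f : α → Set β,
    (∀ a, (G.induce (f a)).Connected) ∧
    (∀ a b, a ≠ b → Disjoint (f a) (f b)) ∧
    (∀ a b, H.Adj a b → ∃ u ∈ f a, ∃ v ∈ f b, G.Adj u v)

/-- A graph is planar iff it has neither a `K₅`-minor nor a `K₃,₃`-minor
(Wagner's theorem). -/
def IsPlanar {V : Type*} (G : SimpleGraph V) : Prop :=
  ¬ IsMinor (completeGraph (Fin 5)) G ∧
    ¬ IsMinor (completeBipartiteGraph (Fin 3) (Fin 3)) G

/-- The number of edges of a graph. -/
noncomputable def edgeCount {V : Type*} (G : SimpleGraph V) : ℕ :=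
  G.edgeSet.ncard

/-- The degree of a vertex. -/
noncomputable def vertexDegree {V : Type*} (G : SimpleGraph V) (v : V) : ℕ :=
  (G.neighborSet v).ncard

/-- `𝒫(n,m)`: the set of labelled planar graphs on `{1,…,n}` with exactly `m` edges. -/
def planarSet (n m : ℕ) : Set (SimpleGraph (Fin n)) :=
  {G | IsPlanar G ∧ edgeCount G = m}

/-- The probability that the uniform random planar graph `P_{n,m}` satisfies `P`. -/
noncomputable def planarProb (n m : ℕ) (P : SimpleGraph (Fin n) → Prop) : ℝ :=
  ({G ∈ planarSet n m | P G}.ncard : ℝ) / ((planarSet n m).ncard : ℝ)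

/-- The number of pendant edges (edges incident to a vertex of degree 1). -/
noncomputable def pendantCount {V : Type*} (G : SimpleGraph V) : ℕ :=
  {e ∈ G.edgeSet | ∃ v ∈ e, vertexDegree G v = 1}.ncard

/-- The set of addable non-edges of `G`: non-edges whose addition keeps the graph planar. -/
def addableSet {V : Type*} (G : SimpleGraph V) : Set (Sym2 V) :=
  {e | ¬ e.IsDiag ∧ e ∉ G.edgeSet ∧ IsPlanar (G ⊔ SimpleGraph.fromEdgeSet {e})}

/-- `add(n,m)`: the minimum number of addable non-edges over all graphs in `𝒫(n,m)`. -/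
noncomputable def addMin (n m : ℕ) : ℕ :=
  sInf ((fun G => (addableSet G).ncard) '' planarSet n m)

/-- `W` carries an induced order-preserving copy of `H` in `G`: the increasing bijection
from `{1,…,h}` to `W` is an isomorphism between `H` and the induced subgraph `G[W]`. -/
def IsOrderCopy {h n : ℕ} (H : SimpleGraph (Fin h)) (G : SimpleGraph (Fin n))
    (W : Finset (Fin n)) : Prop :=
  ∃ hW : W.card = h,
    ∀ i j : Fin h,
      H.Adj i j ↔ G.Adj ((W.orderIsoOfFin hW i : Fin n)) ((W.orderIsoOfFin hW j : Fin n))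

/-- `W` is the vertex set of a connected component of `G`. -/
def IsComponent {V : Type*} (G : SimpleGraph V) (W : Finset V) : Prop :=
  (G.induce (W : Set V)).Connected ∧ ∀ v ∈ W, ∀ u, G.Adj v u → u ∈ W

/-- The number of components of `G` admitting an order-preserving isomorphism to `H`. -/
noncomputable def numOrderComponents {h n : ℕ} (H : SimpleGraph (Fin h))
    (G : SimpleGraph (Fin n)) : ℕ :=
  {W : Finset (Fin n) | IsComponent G W ∧ IsOrderCopy H G W}.ncard

/-- The number of distinct cycles (as subgraphs, identified with their edge sets) of
length at most `k` in `S`. -/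
noncomputable def cycleCountLe {V : Type*} (S : SimpleGraph V) (k : ℕ) : ℕ :=
  {E : Set (Sym2 V) | ∃ (v : V) (c : S.Walk v v),
    c.IsCycle ∧ c.length ≤ k ∧ {e | e ∈ c.edges} = E}.ncard

section Connectivity

variable {V W : Type*} {G : SimpleGraph V} {H : SimpleGraph W}

lemma reachable_map_of_adj {r : V → W} (hr : ∀ ⦃x y⦄, G.Adj x y → H.Reachable (r x) (r y))
    {x y : V} (hxy : G.Reachable x y) : H.Reachable (r x) (r y) := by
  rw [reachable_iff_reflTransGen] at hxy ⊢
  exact Relation.ReflTransGen.lift' r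
    (fun a b hab => (reachable_iff_reflTransGen _ _).1 (hr hab)) _ _ hxy

lemma connected_of_surjective_of_adj (hG : G.Connected) {r : V → W} (hsurj : r.Surjective)
    (hr : ∀ ⦃x y⦄, G.Adj x y → H.Reachable (r x) (r y)) : H.Connected := by
  have : Nonempty W := hG.nonempty.map r
  exact ⟨hsurj.forall₂.2 fun x y => reachable_map_of_adj hr (hG.preconnected x y)⟩

lemma connected_induce_image {s : Set V} (φ : G →g H) (hs : (G.induce s).Connected) :
    (H.induce (φ '' s)).Connected :=
  hs.map (induceHom φ (Set.mapsTo_image φ s)) (Set.surjective_mapsTo_image_restrict φ s)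

end Connectivity

section Minor

variable {α V W : Type*} {H : SimpleGraph α} {G : SimpleGraph V} {K : SimpleGraph W}
  {f : α → Set V}

/-- `f` is a family of branch sets exhibiting `H` as a minor of `G`. -/
structure IsMinorModel (H : SimpleGraph α) (G : SimpleGraph V) (f : α → Set V) : Prop where
  connected : ∀ a, (G.induce (f a)).Connected
  disjoint : ∀ a b, a ≠ b → Disjoint (f a) (f b)
  exists_adj : ∀ a b, H.Adj a b → ∃ x ∈ f a, ∃ y ∈ f b, G.Adj x y

lemma IsMinor.exists_isMinorModel (h : IsMinor H G) : ∃ f, IsMinorModel H G f :=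
  let ⟨f, hconn, hdisj, hadj⟩ := h
  ⟨f, hconn, hdisj, hadj⟩

lemma IsMinorModel.eq_of_mem (hf : IsMinorModel H G f) {a b : α} {x : V} (ha : x ∈ f a)
    (hb : x ∈ f b) : a = b :=
  by_contra fun hab => Set.disjoint_left.1 (hf.disjoint a b hab) ha hb

lemma IsMinorModel.nonempty (hf : IsMinorModel H G f) (a : α) : (f a).Nonempty :=
  Set.nonempty_coe_sort.1 (hf.connected a).nonempty

lemma IsMinor.of_injective_hom (h : IsMinor H G) (φ : G →g K) (hφ : Function.Injective φ) :
    IsMinor H K := by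
  obtain ⟨f, hf⟩ := h.exists_isMinorModel
  refine ⟨fun a => φ '' f a, fun a => connected_induce_image φ (hf.connected a),
    fun a b hab => (Set.disjoint_image_iff hφ).2 (hf.disjoint a b hab), fun a b hab => ?_⟩
  obtain ⟨x, hx, y, hy, hxy⟩ := hf.exists_adj a b hab
  exact ⟨φ x, Set.mem_image_of_mem φ hx, φ y, Set.mem_image_of_mem φ hy, φ.map_adj hxy⟩

end Minor

section TwoConnected

variable {α β : Type*}

/-- `H` is 2-connected: it has at least three vertices, and deleting at most one of them leaves it
connected. The deleted vertices are given as a subsingleton set, so that deleting nothing is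
included. -/
structure IsTwoConnected (H : SimpleGraph α) : Prop where
  three_le_card : 3 ≤ ENat.card α
  preconnected_induce_compl : ∀ T : Set α, T.Subsingleton → (H.induce Tᶜ).Preconnected

lemma isTwoConnected_completeGraph (h : 3 ≤ ENat.card α) : IsTwoConnected (completeGraph α) where
  three_le_card := h
  preconnected_induce_compl T _ a b := by
    obtain rfl | hab := eq_or_ne a b
    · exact Reachable.refl a
    · exact Adj.reachable (induce_adj.2 (Subtype.coe_ne_coe.2 hab))

lemma isTwoConnected_completeBipartiteGraph [Nontrivial α] [Nontrivial β] :
    IsTwoConnected (completeBipartiteGraph α β) where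
  three_le_card := by
    rw [ENat.card_sum]
    have hα : 2 ≤ ENat.card α := Order.add_one_le_of_lt ENat.one_lt_card
    have hβ : 1 ≤ ENat.card β := ENat.one_lt_card.le
    exact add_le_add hα hβ
  preconnected_induce_compl T hT := by
    obtain ⟨c, hc⟩ : ∃ c : α, Sum.inl c ∉ T := by
      obtain ⟨c, c', hcc'⟩ := exists_pair_ne α
      by_contra! h
      exact hcc' (Sum.inl_injective (hT (h c) (h c')))
    obtain ⟨d, hd⟩ : ∃ d : β, Sum.inr d ∉ T := by
      obtain ⟨d, d', hdd'⟩ := exists_pair_ne β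
      by_contra! h
      exact hdd' (Sum.inr_injective (hT (h d) (h d')))
    have adj (a b) (ha : Sum.inl a ∉ T) (hb : Sum.inr b ∉ T) :
        ((completeBipartiteGraph α β).induce Tᶜ).Adj ⟨Sum.inl a, ha⟩ ⟨Sum.inr b, hb⟩ := by simp
    have reach (x : ↥Tᶜ) :
        ((completeBipartiteGraph α β).induce Tᶜ).Reachable ⟨Sum.inl c, hc⟩ x := by
      obtain ⟨a | b, hx⟩ := x
      · exact (adj c d hc hd).reachable.trans (adj a d hx hd).symm.reachable
      · exact (adj c b hc hx).reachable
    exact fun x y => (reach x).symm.trans (reach y)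

end TwoConnected

section BridgeCut

variable {α V : Type*} {H : SimpleGraph α} {G : SimpleGraph V} {A s : Set V} {u v : V}
  {f : α → Set V}

/-- No edge of `G` leaves `A`, except possibly `uv` with `u ∈ A` and `v ∉ A`. In contrast to
`SimpleGraph.IsBridge`, this records the two sides of the bridge and is symmetric in them. -/
structure IsBridgeCut (G : SimpleGraph V) (A : Set V) (u v : V) : Prop where
  left_mem : u ∈ A
  right_notMem : v ∉ A
  eq_of_adj : ∀ ⦃x⦄, x ∈ A → ∀ ⦃y⦄, y ∉ A → G.Adj x y → x = u ∧ y = v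

namespace IsBridgeCut

lemma of_isBridge (h : G.IsBridge s(u, v)) :
    IsBridgeCut G {x | (G.deleteEdges {s(u, v)}).Reachable u x} u v where
  left_mem := Reachable.refl u
  right_notMem := isBridge_iff.1 h
  eq_of_adj x hx y hy hxy := by
    have heq : s(x, y) = s(u, v) := by
      by_contra hne
      exact hy (Reachable.trans hx (deleteEdges_adj.2 ⟨hxy, hne⟩).reachable)
    obtain hxy | ⟨-, rfl⟩ := Sym2.eq_iff.1 heq
    · exact hxy
    · exact absurd (Reachable.refl y) hy

lemma compl (h : IsBridgeCut G A u v) : IsBridgeCut G Aᶜ v u where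
  left_mem := h.right_notMem
  right_notMem := not_not.2 h.left_mem
  eq_of_adj _ hx _ hy hxy := (h.eq_of_adj (not_not.1 hy) hx hxy.symm).symm

lemma mem_of_connected (h : IsBridgeCut G A u v) (hs : (G.induce s).Connected)
    (hsA : (s ∩ A).Nonempty) (hsA' : ¬ s ⊆ A) : u ∈ s := by
  obtain ⟨x, hx, hxA⟩ := hsA
  obtain ⟨y, hy, hyA⟩ := Set.not_subset.1 hsA'
  obtain ⟨p⟩ := hs.preconnected ⟨x, hx⟩ ⟨y, hy⟩
  obtain ⟨d, -, hd, hd'⟩ := p.exists_boundary_dart (Subtype.val ⁻¹' A) hxA hyA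
  exact (h.eq_of_adj hd hd' d.adj).1 ▸ d.fst.2

lemma connected_induce_preimage (h : IsBridgeCut G A u v) (hs : (G.induce s).Connected)
    (hsA : (s ∩ A).Nonempty) :
    ((G.induce A).induce (Subtype.val ⁻¹' s : Set A)).Connected := by
  classical
  -- Collapse `s \ A` to `u`. If `u ∉ s`, then `s ⊆ A` and the choice of `w` is irrelevant.
  obtain ⟨w, hw, hwu⟩ : ∃ w ∈ s ∩ A, ¬ s ⊆ A → w = u := by
    by_cases hsA' : s ⊆ A
    · exact hsA.imp fun w hw => ⟨hw, fun hn => absurd hsA' hn⟩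
    · exact ⟨u, ⟨h.mem_of_connected hs hsA hsA', h.left_mem⟩, fun _ => rfl⟩
  let r (x : s) : (Subtype.val ⁻¹' s : Set A) :=
    if hx : x.1 ∈ A then ⟨⟨x, hx⟩, x.2⟩ else ⟨⟨w, hw.2⟩, hw.1⟩
  have r_of_mem (x : s) (hx : x.1 ∈ A) : r x = ⟨⟨x, hx⟩, x.2⟩ := dif_pos hx
  have r_of_notMem (x : s) (hx : x.1 ∉ A) : r x = ⟨⟨w, hw.2⟩, hw.1⟩ := dif_neg hx
  have r_eq_of_cross (x y : s) (hx : x.1 ∈ A) (hy : y.1 ∉ A) (hxy : G.Adj x y) : r x = r y := by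
    have hxw : x.1 = w :=
      (h.eq_of_adj hx hy hxy).1.trans (hwu fun hsub => hy (hsub y.2)).symm
    rw [r_of_mem x hx, r_of_notMem y hy]
    exact Subtype.ext (Subtype.ext hxw)
  refine connected_of_surjective_of_adj hs (r := r)
    (fun x => ⟨⟨x.1, x.2⟩, r_of_mem _ x.1.2⟩) fun x y hxy => ?_
  by_cases hx : x.1 ∈ A <;> by_cases hy : y.1 ∈ A
  · rw [r_of_mem x hx, r_of_mem y hy]
    exact Adj.reachable hxy
  · rw [r_eq_of_cross x y hx hy hxy]
  · rw [r_eq_of_cross y x hy hx hxy.symm]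
  · rw [r_of_notMem x hx, r_of_notMem y hy]

lemma isMinor_induce (h : IsBridgeCut G A u v) (hf : IsMinorModel H G f)
    (hA : ∀ a, (f a ∩ A).Nonempty) : IsMinor H (G.induce A) := by
  have left_mem {a x} (hx : x ∈ f a) (hxA : x ∉ A) : u ∈ f a :=
    h.mem_of_connected (hf.connected a) (hA a) fun hsub => hxA (hsub hx)
  -- If an end `x` of the edge were outside `A`, then `u` would lie in both branch sets.
  have mem_side {a b x y} (hab : a ≠ b) (hx : x ∈ f a) (hy : y ∈ f b) (hxy : G.Adj x y) :
      x ∈ A := by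
    by_contra hxA
    refine hab (hf.eq_of_mem (left_mem hx hxA) ?_)
    by_cases hyA : y ∈ A
    · exact (h.eq_of_adj hyA hxA hxy.symm).1 ▸ hy
    · exact left_mem hy hyA
  refine ⟨fun a => Subtype.val ⁻¹' f a,
    fun a => h.connected_induce_preimage (hf.connected a) (hA a),
    fun a b hab => (hf.disjoint a b hab).preimage _, fun a b hab => ?_⟩
  obtain ⟨x, hx, y, hy, hxy⟩ := hf.exists_adj a b hab
  exact ⟨⟨x, mem_side hab.ne hx hy hxy⟩, hx, ⟨y, mem_side hab.ne' hy hx hxy.symm⟩, hy, hxy⟩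

lemma subset_of_adj (h : IsBridgeCut G A u v) (hf : IsMinorModel H G f) {a b : α}
    (hab : H.Adj a b) (ha : f a ⊆ A) (hua : u ∉ f a) (hub : u ∉ f b) : f b ⊆ A := by
  obtain ⟨x, hx, y, hy, hxy⟩ := hf.exists_adj a b hab
  have hyA : y ∈ A := by
    by_contra hyA
    exact hua ((h.eq_of_adj (ha hx) hyA hxy).1 ▸ hx)
  by_contra hbA
  exact hub (h.mem_of_connected (hf.connected b) ⟨y, hy, hyA⟩ hbA)

lemma subset_of_subset (h : IsBridgeCut G A u v) (hH : IsTwoConnected H)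
    (hf : IsMinorModel H G f) {a b : α} (ha : f a ⊆ A) (hua : u ∉ f a) (hub : u ∉ f b) :
    f b ⊆ A := by
  have hT : {c | u ∈ f c}.Subsingleton := fun _ hc _ hd => hf.eq_of_mem hc hd
  obtain ⟨p⟩ := hH.preconnected_induce_compl _ hT ⟨a, hua⟩ ⟨b, hub⟩
  by_contra hb
  obtain ⟨d, -, hd, hd'⟩ := p.exists_boundary_dart {c | f c ⊆ A} ha hb
  exact hd' (h.subset_of_adj hf d.adj hd d.fst.2 d.snd.2)

lemma not_subset_compl_of_subset (h : IsBridgeCut G A u v) (hH : IsTwoConnected H)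
    (hf : IsMinorModel H G f) {a b : α} (ha : f a ⊆ A) : ¬ f b ⊆ Aᶜ := by
  intro hb
  have hub : u ∉ f b := fun hu => hb hu h.left_mem
  have hva : v ∉ f a := fun hv => h.right_notMem (ha hv)
  have hbA : ¬ f b ⊆ A := fun hbA =>
    let ⟨_, hx⟩ := hf.nonempty b
    hb hx (hbA hx)
  have haA : ¬ f a ⊆ Aᶜ := fun haA =>
    let ⟨_, hx⟩ := hf.nonempty a
    haA hx (ha hx)
  have hua : u ∈ f a := by_contra fun hua => hbA (h.subset_of_subset hH hf ha hua hub)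
  have hvb : v ∈ f b := by_contra fun hvb => haA (h.compl.subset_of_subset hH hf hb hvb hva)
  -- Both ends of the bridge are taken, so a third branch set lies on one side and avoids them.
  obtain ⟨c, hca, hcb⟩ := ENat.exists_ne_ne_of_three_le hH.three_le_card a b
  have huc : u ∉ f c := fun hu => hca (hf.eq_of_mem hu hua)
  have hvc : v ∉ f c := fun hv => hcb (hf.eq_of_mem hv hvb)
  have hcA : ¬ f c ⊆ A := fun hc => hbA (h.subset_of_subset hH hf hc huc hub)
  have hcA' : ¬ f c ⊆ Aᶜ := fun hc => haA (h.compl.subset_of_subset hH hf hc hvc hva)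
  rw [Set.subset_compl_iff_disjoint_right, Set.not_disjoint_iff_nonempty_inter] at hcA'
  exact huc (h.mem_of_connected (hf.connected c) hcA' hcA)

theorem isMinor_induce_or (h : IsBridgeCut G A u v) (hH : IsTwoConnected H) (hm : IsMinor H G) :
    IsMinor H (G.induce A) ∨ IsMinor H (G.induce Aᶜ) := by
  obtain ⟨f, hf⟩ := hm.exists_isMinorModel
  by_cases hA : ∃ a, f a ⊆ A
  · obtain ⟨a, ha⟩ := hA
    refine .inl (h.isMinor_induce hf fun b => ?_)
    rw [← Set.not_disjoint_iff_nonempty_inter, ← Set.subset_compl_iff_disjoint_right]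
    exact h.not_subset_compl_of_subset hH hf ha
  · refine .inr (h.compl.isMinor_induce hf fun b => ?_)
    exact Set.inter_compl_nonempty_iff.2 fun hb => hA ⟨b, hb⟩

/-- The inclusion of one side of the cut, which does not meet the edge `uv`. -/
def induceHomDeleteEdges (h : IsBridgeCut G A u v) : G.induce A →g G.deleteEdges {s(u, v)} where
  toFun := Subtype.val
  map_rel' {x y} hxy := deleteEdges_adj.2 ⟨hxy, fun he => h.right_notMem <| by
    obtain ⟨-, hy⟩ | ⟨hx, -⟩ := Sym2.eq_iff.1 he
    · exact hy ▸ y.2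
    · exact hx ▸ x.2⟩

end IsBridgeCut

theorem IsTwoConnected.isMinor_deleteEdges_of_isBridge (hH : IsTwoConnected H)
    (hm : IsMinor H G) (huv : G.IsBridge s(u, v)) : IsMinor H (G.deleteEdges {s(u, v)}) := by
  have hcut := IsBridgeCut.of_isBridge huv
  rcases hcut.isMinor_induce_or hH hm with h | h
  · exact h.of_injective_hom hcut.induceHomDeleteEdges Subtype.val_injective
  · rw [Sym2.eq_swap]
    exact h.of_injective_hom hcut.compl.induceHomDeleteEdges Subtype.val_injective

theorem IsTwoConnected.isMinor_of_isMinor_sup_edge (hH : IsTwoConnected H)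
    (huv : ¬ G.Reachable u v) (hm : IsMinor H (G ⊔ edge u v)) : IsMinor H G := by
  have hbridge : (G ⊔ edge u v).IsBridge s(u, v) :=
    isBridge_sup_edge.2 (IsBridge.of_not_reachable huv)
  have hdelete : (G ⊔ edge u v).deleteEdges {s(u, v)} = G := by
    have hG : Disjoint (G.edgeSet) {s(u, v)} :=
      Set.disjoint_singleton_right.2 fun h => huv (Adj.reachable h)
    rw [deleteEdges_sup, deleteEdges_eq_self.2 hG]
    simp [edge]
  exact hdelete ▸ hH.isMinor_deleteEdges_of_isBridge hm hbridge

end BridgeCut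

section Planar

variable {V : Type*} {G : SimpleGraph V}

theorem IsPlanar.sup_edge (hG : IsPlanar G) {u v : V} (huv : ¬ G.Reachable u v) :
    IsPlanar (G ⊔ edge u v) := by
  have h5 : IsTwoConnected (completeGraph (Fin 5)) := isTwoConnected_completeGraph (by norm_num)
  have h33 : IsTwoConnected (completeBipartiteGraph (Fin 3) (Fin 3)) :=
    isTwoConnected_completeBipartiteGraph
  exact ⟨fun h => hG.1 (h5.isMinor_of_isMinor_sup_edge huv h),
    fun h => hG.2 (h33.isMinor_of_isMinor_sup_edge huv h)⟩

/-- The graph joining the vertices of `G` that lie in different components. -/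
def unreachableGraph (G : SimpleGraph V) : SimpleGraph V where
  Adj x y := ¬ G.Reachable x y
  symm := ⟨fun _ _ hxy hyx => hxy hyx.symm⟩
  loopless := ⟨fun x hx => hx (Reachable.refl x)⟩

theorem IsPlanar.edgeSet_unreachableGraph_subset (hG : IsPlanar G) :
    (unreachableGraph G).edgeSet ⊆ addableSet G := by
  intro e he
  refine ⟨not_isDiag_of_mem_edgeSet _ he, ?_⟩
  induction e with
  | h u v => exact ⟨fun huv => he (Adj.reachable huv), hG.sup_edge he⟩

end Planar

section Counting

lemma card_eq_fiber_pairs {α ι : Type*} [Finite α] [Fintype ι] (f : α → ι) :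
    Nat.card {p : α × α // f p.1 = f p.2} = ∑ i, Nat.card {a // f a = i} ^ 2 := by
  let e : {p : α × α // f p.1 = f p.2} ≃ Σ i, {a // f a = i} × {a // f a = i} :=
    { toFun p := ⟨f p.1.1, ⟨p.1.1, rfl⟩, ⟨p.1.2, p.2.symm⟩⟩
      invFun x := ⟨(x.2.1, x.2.2), x.2.1.2.trans x.2.2.2.symm⟩
      left_inv _ := rfl
      right_inv := by rintro ⟨_, ⟨a, rfl⟩, ⟨b, hb⟩⟩; rfl }
  simp only [Nat.card_congr e, Nat.card_sigma, Nat.card_prod, sq]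

variable {V : Type*} [Finite V] (G : SimpleGraph V)

lemma sum_card_component [Fintype G.ConnectedComponent] :
    ∑ C : G.ConnectedComponent, Nat.card C = Nat.card V := by
  rw [← Nat.card_sigma]
  exact Nat.card_congr (Equiv.sigmaFiberEquiv G.connectedComponentMk)

lemma card_reachable_pairs [Fintype G.ConnectedComponent] :
    Nat.card {p : V × V // G.Reachable p.1 p.2} =
      ∑ C : G.ConnectedComponent, Nat.card C ^ 2 := by
  simp_rw [← ConnectedComponent.eq]
  exact card_eq_fiber_pairs G.connectedComponentMk

lemma sum_card_edgeSet_component_le [Fintype G.ConnectedComponent] :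
    ∑ C : G.ConnectedComponent, Nat.card C.toSimpleGraph.edgeSet ≤ edgeCount G := by
  rw [← Nat.card_sigma]
  refine Nat.card_le_card_of_injective
    (fun e : Σ C : G.ConnectedComponent, C.toSimpleGraph.edgeSet =>
      e.1.toSimpleGraph_hom.mapEdgeSet e.2) ?_
  rintro ⟨C, e, he⟩ ⟨D, e', he'⟩ heq
  obtain rfl : C = D := by
    induction e with
    | h x y =>
      have hmap : Sym2.map Subtype.val s(x, y) = Sym2.map Subtype.val e' :=
        congrArg Subtype.val heq
      have hx : x.1 ∈ Sym2.map Subtype.val e' :=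
        hmap ▸ Sym2.mem_map.2 ⟨x, Sym2.mem_mk_left x y, rfl⟩
      obtain ⟨z, -, hz⟩ := Sym2.mem_map.1 hx
      exact ConnectedComponent.eq_of_common_vertex x.2 (hz ▸ z.2)
  exact congrArg _ (Hom.mapEdgeSet.injective _ Subtype.val_injective heq)

lemma sum_card_component_sub_one_le [Fintype G.ConnectedComponent] :
    ∑ C : G.ConnectedComponent, (Nat.card C - 1) ≤ edgeCount G :=
  (Finset.sum_le_sum fun C _ => Nat.sub_le_of_le_add
    C.connected_toSimpleGraph.card_vert_le_card_edgeSet_add_one).trans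
    (sum_card_edgeSet_component_le G)

theorem card_reachable_pairs_le :
    Nat.card {p : V × V // G.Reachable p.1 p.2} ≤
      Nat.card V + (edgeCount G + 1) * edgeCount G := by
  have := Fintype.ofFinite G.ConnectedComponent
  have card_le (C : G.ConnectedComponent) : Nat.card C - 1 ≤ edgeCount G :=
    (Finset.single_le_sum (f := fun C : G.ConnectedComponent => Nat.card C - 1)
      (fun _ _ => Nat.zero_le _) (Finset.mem_univ C)).trans (sum_card_component_sub_one_le G)
  calc Nat.card {p : V × V // G.Reachable p.1 p.2}
      = ∑ C : G.ConnectedComponent, Nat.card C ^ 2 := card_reachable_pairs G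
    _ ≤ ∑ C : G.ConnectedComponent, (Nat.card C + (edgeCount G + 1) * (Nat.card C - 1)) := by
        refine Finset.sum_le_sum fun C _ => ?_
        have hC := card_le C
        obtain ⟨k, hk⟩ : ∃ k, Nat.card C = k + 1 := Nat.exists_eq_add_one.2
          (Nat.card_pos_iff.2 ⟨C.nonempty_supp.to_subtype, inferInstance⟩)
        rw [hk, Nat.add_sub_cancel] at hC ⊢
        nlinarith
    _ = Nat.card V + (edgeCount G + 1) * ∑ C : G.ConnectedComponent, (Nat.card C - 1) := by
        rw [Finset.sum_add_distrib, sum_card_component, Finset.mul_sum]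
    _ ≤ Nat.card V + (edgeCount G + 1) * edgeCount G := by
        gcongr
        exact sum_card_component_sub_one_le G

theorem card_sq_eq_reachable_add_unreachable :
    Nat.card V ^ 2 =
      Nat.card {p : V × V // G.Reachable p.1 p.2} + 2 * edgeCount (unreachableGraph G) := by
  classical
  have := Fintype.ofFinite V
  have hedges : 2 * edgeCount (unreachableGraph G) =
      Nat.card {p : V × V // ¬ G.Reachable p.1 p.2} := by
    rw [edgeCount, Set.ncard_eq_toFinset_card', ← edgeFinset, two_mul_card_edgeFinset,
      Nat.card_eq_fintype_card, Fintype.card_subtype]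
    congr! 2
  rw [hedges, sq, ← Nat.card_prod, ← Nat.card_sum]
  exact Nat.card_congr (Equiv.sumCompl _).symm

end Counting

theorem addable_lower_bound_general {V : Type*} [Finite V] {G : SimpleGraph V} (hG : IsPlanar G) :
    ((Nat.card V : ℝ) + edgeCount G) * ((Nat.card V : ℝ) - edgeCount G - 1) / 2 ≤
      ((addableSet G).ncard : ℝ) := by
  have haddable : edgeCount (unreachableGraph G) ≤ (addableSet G).ncard :=
    Set.ncard_le_ncard hG.edgeSet_unreachableGraph_subset
  have hpairs : Nat.card V ^ 2 ≤
      Nat.card V + (edgeCount G + 1) * edgeCount G + 2 * (addableSet G).ncard := by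
    linarith [card_sq_eq_reachable_add_unreachable G, card_reachable_pairs_le G]
  have : (Nat.card V : ℝ) ^ 2 ≤
      Nat.card V + (edgeCount G + 1) * edgeCount G + 2 * (addableSet G).ncard := mod_cast hpairs
  linarith

theorem addable_lower_bound (n m : ℕ) (hn : 0 < n) (hm : 0 < m)
    (hne : (planarSet n m).Nonempty) :
    (∀ G ∈ planarSet n m,
        ((n : ℝ) + m) * ((n : ℝ) - m - 1) / 2 ≤ ((addableSet G).ncard : ℝ)) ∧
      ((n : ℝ) + m) * ((n : ℝ) - m - 1) / 2 ≤ (addMin n m : ℝ) := by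
  have bound : ∀ G ∈ planarSet n m,
      ((n : ℝ) + m) * ((n : ℝ) - m - 1) / 2 ≤ ((addableSet G).ncard : ℝ) := by
    rintro G ⟨hG, rfl⟩
    simpa only [Nat.card_fin] using addable_lower_bound_general hG
  obtain ⟨G, hG, hmin⟩ := Nat.sInf_mem (hne.image fun G => (addableSet G).ncard)
  exact ⟨bound, (bound G hG).trans_eq (congrArg Nat.cast hmin)⟩
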